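/- The d_1·d_2·⋯·d_N product states attached to the subcubes in {B_0} ∪ {P_{k,K} : 1 ≤ k ≤ L, K ∈ Λ, P ∈ {C,D}} are pairwise orthogonal and nonzero; consequently they form an orthogonal basis of H_d. -/

import Mathlib

/-!
The proof has two independent halves.

*Linear algebra* (`basis_of_partition`). Suppose a family of boxes `∏ᵢ {loᵢ, …, hiᵢ}` partitions
`Z`. A point `v` lying in the box with lower corner `lo` labels the product state of that box with
Fourier indices `v - lo`, so the attached states are parametrised by `Z` itself. States from
different boxes have disjoint supports; states from the same box differ in some Fourier index, and
the corresponding factor of the inner product is a vanishing sum of roots of unity. An orthogonal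
family of `|Z| = ∏ᵢ dᵢ` nonzero vectors is a basis.

*Combinatorics* (`cube_exists`, `cube_unique`). The central box and the boxes `P_{k,K}`
partition `Z`. The index `k` of the layer containing `v` is the distance from `v` to the boundary,
plus one. Inside a layer, encode `(K, P)` by its sequence of sides `s₀, …, s_{N-1}`. Evenness of
`K` says exactly that `i ∈ K ↔ sᵢ ≠ sᵢ₋₁` holds cyclically, also at `i = 0`
(`even_card_iff`). Then `v` lies in the box iff `sᵢ` is the side of `vᵢ` whenever `vᵢ` is extreme
in the layer, and `sᵢ ≠ sᵢ₋₁` whenever it is not. As some coordinate is extreme, this recursion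
around the cycle has exactly one solution. Oddness of `N` ensures that a point with no extreme
coordinate lies in no box of the layer: all coordinates would belong to `K`.
-/

open scoped BigOperators Matrix

namespace SNL

/-- `side N K b i` is `false` if the `i`-th component (0-based) of the subcube `P_K`
(`b = false` for `C`, `b = true` for `D`) is of "low" type (`{0}` or `{0,1}`),
and `true` if it is of "high" type (`{2}` or `{1,2}`), following the recursive
definition: the first component is low for `C` and high for `D`, and the type flips
from component `i` to `i+1` exactly when coordinate `i+1` belongs to `K`. -/
def side (N : ℕ) (K : Finset (Fin N)) (b : Bool) : ℕ → Bool
  | 0 => b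
  | i + 1 => Bool.xor (side N K b i) (decide ((i + 1) ∈ K.image Fin.val))

/-- Lower endpoint of the `i`-th component of the subcube `P_{k,K}` of
`Z_{d₁} × ⋯ × Z_{d_N}`, obtained from `P_K` by the coordinatewise replacements
`{0} ↦ {k-1}`, `{2} ↦ {d_i - k}`, `{0,1} ↦ {k-1, …, d_i-k-1}`,
`{1,2} ↦ {k, …, d_i-k}`. -/
def glo (N : ℕ) (d : Fin N → ℕ) (k : ℕ) (K : Finset (Fin N)) (b : Bool)
    (i : Fin N) : ℕ :=
  if i ∈ K then (if side N K b i.val then k else k - 1)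
  else (if side N K b i.val then d i - k else k - 1)

/-- Upper endpoint of the `i`-th component of the subcube `P_{k,K}`. -/
def ghi (N : ℕ) (d : Fin N → ℕ) (k : ℕ) (K : Finset (Fin N)) (b : Bool)
    (i : Fin N) : ℕ :=
  if i ∈ K then (if side N K b i.val then d i - k else d i - k - 1)
  else (if side N K b i.val then d i - k else k - 1)

/-- The `i`-th component of the subcube `P_{k,K}`, an interval of integers. -/
def gcomp (N : ℕ) (d : Fin N → ℕ) (k : ℕ) (K : Finset (Fin N)) (b : Bool)
    (i : Fin N) : Finset ℕ :=
  Finset.Icc (glo N d k K b i) (ghi N d k K b i)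

/-- The subcube `P_{k,K}` of `Z = Z_{d₁} × ⋯ × Z_{d_N}` as a set of vectors. -/
def gcube (N : ℕ) (d : Fin N → ℕ) (k : ℕ) (K : Finset (Fin N)) (b : Bool) :
    Set ((i : Fin N) → Fin (d i)) :=
  {v | ∀ i, (v i : ℕ) ∈ gcomp N d k K b i}

/-- The central subcube `B₀ = ∏ᵢ {L, L+1, …, d_i - L - 1}`. -/
def gB0 (N : ℕ) (d : Fin N → ℕ) (L : ℕ) : Set ((i : Fin N) → Fin (d i)) :=
  {v | ∀ i, (v i : ℕ) ∈ Finset.Icc L (d i - L - 1)}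

/-- The `k`-th layer `L_k = ∏ᵢ {k-1, …, d_i-k} ∖ ∏ᵢ {k, …, d_i-k-1}`. -/
def layer (N : ℕ) (d : Fin N → ℕ) (k : ℕ) : Set ((i : Fin N) → Fin (d i)) :=
  {v | ∀ i, (v i : ℕ) ∈ Finset.Icc (k - 1) (d i - k)} \
    {v | ∀ i, (v i : ℕ) ∈ Finset.Icc k (d i - k - 1)}

/-- The Fourier vector `F_A^n` attached to the interval `A = {a, …, b}` of size
`r = b - a + 1`: it is `exp(2π√-1·(m-a)·n/r)` on `A` and `0` elsewhere. -/
noncomputable def fourier (a b n : ℕ) (m : ℕ) : ℂ :=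
  if m ∈ Finset.Icc a b then
    Complex.exp (2 * Real.pi * Complex.I * (((m : ℂ) - (a : ℂ)) * (n : ℂ)) /
      ((b : ℂ) - (a : ℂ) + 1))
  else 0

/-- The product state attached to the subcube `P_{k,K}` with Fourier indices `n`. -/
noncomputable def gAtt (N : ℕ) (d : Fin N → ℕ) (k : ℕ) (K : Finset (Fin N))
    (b : Bool) (n : Fin N → ℕ) : ((i : Fin N) → Fin (d i)) → ℂ :=
  fun v => ∏ i, fourier (glo N d k K b i) (ghi N d k K b i) (n i) (v i)

/-- The product state attached to the central subcube `B₀` with Fourier indices `n`. -/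
noncomputable def gAttB0 (N : ℕ) (d : Fin N → ℕ) (L : ℕ) (n : Fin N → ℕ) :
    ((i : Fin N) → Fin (d i)) → ℂ :=
  fun v => ∏ i, fourier L (d i - L - 1) (n i) (v i)

/-- The inner product on `H_d = (Z → ℂ)`. -/
noncomputable def ginner (N : ℕ) (d : Fin N → ℕ)
    (ψ φ : ((i : Fin N) → Fin (d i)) → ℂ) : ℂ :=
  ∑ v, (starRingEnd ℂ) (ψ v) * φ v

/-- A product vector in `H_d`. -/
def gIsProdVec (N : ℕ) (d : Fin N → ℕ) (ψ : ((i : Fin N) → Fin (d i)) → ℂ) : Prop :=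
  ∃ f : (i : Fin N) → Fin (d i) → ℂ, ∀ v, ψ v = ∏ i, f i (v i)

/-- The stopper state `|S⟩`, the constant function `1`. -/
def gS (N : ℕ) (d : Fin N → ℕ) : ((i : Fin N) → Fin (d i)) → ℂ := fun _ => 1

/-- The full collection of product states attached to the subcubes
`B₀` and `P_{k,K}` (`1 ≤ k ≤ L`, `K` even, `P ∈ {C, D}`). -/
noncomputable def gBasisSet (N : ℕ) (d : Fin N → ℕ) (L : ℕ) :
    Set (((i : Fin N) → Fin (d i)) → ℂ) :=
  {ψ | ∃ n : Fin N → ℕ, (∀ i, n i < d i - 2 * L) ∧ ψ = gAttB0 N d L n} ∪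
    {ψ | ∃ k K b n, 1 ≤ k ∧ k ≤ L ∧ Even (Finset.card K) ∧
      (∀ i, n i < ghi N d k K b i - glo N d k K b i + 1) ∧ ψ = gAtt N d k K b n}

/-- The orthogonal product set `O_d` of all product states attached to the
first-layer subcubes `P_{1,K}`. -/
noncomputable def setOd (N : ℕ) (d : Fin N → ℕ) :
    Set (((i : Fin N) → Fin (d i)) → ℂ) :=
  {ψ | ∃ K b n, Even (Finset.card K) ∧
    (∀ i, n i < ghi N d 1 K b i - glo N d 1 K b i + 1) ∧ ψ = gAtt N d 1 K b n}

/-- The unextendible product basis `U_d`: the stopper `|S⟩` together with, for every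
subcube `Q` in the decomposition, all its attached states other than `|Q⁺⟩`
(the one with all Fourier indices `0`). -/
noncomputable def setUd (N : ℕ) (d : Fin N → ℕ) (L : ℕ) :
    Set (((i : Fin N) → Fin (d i)) → ℂ) :=
  {gS N d} ∪
    {ψ | ∃ n : Fin N → ℕ, (∀ i, n i < d i - 2 * L) ∧ (∃ i, n i ≠ 0) ∧
      ψ = gAttB0 N d L n} ∪
    {ψ | ∃ k K b n, 1 ≤ k ∧ k ≤ L ∧ Even (Finset.card K) ∧
      (∀ i, n i < ghi N d k K b i - glo N d k K b i + 1) ∧ (∃ i, n i ≠ 0) ∧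
      ψ = gAtt N d k K b n}

/-- Restriction of a vector to the coordinates other than `m`. -/
def gres (N : ℕ) (d : Fin N → ℕ) (m : Fin N) (v : (i : Fin N) → Fin (d i)) :
    (j : {i : Fin N // i ≠ m}) → Fin (d j.1) :=
  fun j => v j.1

/-- The operator `I_m ⊗ E` on `H_d`, where `E` is a matrix acting on the joint
party of all subsystems except `m`. -/
noncomputable def gopIE (N : ℕ) (d : Fin N → ℕ) (m : Fin N)
    (E : Matrix ((j : {i : Fin N // i ≠ m}) → Fin (d j.1))
      ((j : {i : Fin N // i ≠ m}) → Fin (d j.1)) ℂ)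
    (ψ : ((i : Fin N) → Fin (d i)) → ℂ) : ((i : Fin N) → Fin (d i)) → ℂ :=
  fun v => ∑ v' : (i : Fin N) → Fin (d i),
    if v' m = v m then E (gres N d m v) (gres N d m v') * ψ v' else 0

end SNL

namespace SNL

/-! ### Fourier vectors and boxes -/

/-- The product state of the box `∏ᵢ {loᵢ, …, hiᵢ}` with Fourier indices `n`; `gAtt` and `gAttB0`
are the instances for the boxes `P_{k,K}` and `B₀`. -/
noncomputable def boxState {N : ℕ} {d : Fin N → ℕ} (lo hi n : Fin N → ℕ) :
    ((i : Fin N) → Fin (d i)) → ℂ :=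
  fun v => ∏ i, fourier (lo i) (hi i) (n i) (v i)

theorem fourier_ne_zero {a b n m : ℕ} (ha : a ≤ m) (hb : m ≤ b) : fourier a b n m ≠ 0 := by
  rw [fourier, if_pos (Finset.mem_Icc.2 ⟨ha, hb⟩)]
  exact Complex.exp_ne_zero _

theorem fourier_ne_zero_iff {a b n m : ℕ} : fourier a b n m ≠ 0 ↔ a ≤ m ∧ m ≤ b := by
  refine ⟨fun h => ?_, fun h => fourier_ne_zero h.1 h.2⟩
  by_contra hc
  exact h (by rw [fourier, if_neg (by rwa [Finset.mem_Icc])])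

theorem fourier_add (a r n j : ℕ) (hj : j < r) :
    fourier a (a + r - 1) n (a + j) =
      (Complex.exp (2 * Real.pi * Complex.I / (r : ℂ)) ^ n) ^ j := by
  rw [fourier, if_pos (Finset.mem_Icc.2 ⟨by omega, by omega⟩), ← pow_mul, ← Complex.exp_nat_mul]
  have h : ((a + r - 1 : ℕ) : ℂ) = (a : ℂ) + r - 1 := by
    rw [Nat.cast_sub (by omega)]; push_cast; ring
  rw [h]
  congr 1
  push_cast
  ring

theorem fourier_orthogonal {a b d n n' : ℕ} (hab : a ≤ b) (hb : b < d)
    (hn : n < b - a + 1) (hn' : n' < b - a + 1) (hne : n ≠ n') :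
    ∑ x : Fin d, (starRingEnd ℂ) (fourier a b n x) * fourier a b n' x = 0 := by
  obtain ⟨r, hr, rfl⟩ : ∃ r, 0 < r ∧ b = a + r - 1 := ⟨b - a + 1, by omega, by omega⟩
  have e : a + r - 1 - a + 1 = r := by omega
  rw [e] at hn hn'
  rw [Fin.sum_univ_eq_sum_range
    (fun x => (starRingEnd ℂ) (fourier a (a + r - 1) n x) * fourier a (a + r - 1) n' x) d]
  rw [← Finset.sum_subset (s₁ := Finset.Ico a (a + r))
    (fun x hx => by simp only [Finset.mem_Ico, Finset.mem_range] at *; omega)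
    (fun x _ hx => by
      have : fourier a (a + r - 1) n' x = 0 := by
        by_contra h
        have := fourier_ne_zero_iff.1 h
        exact hx (Finset.mem_Ico.2 ⟨this.1, by omega⟩)
      rw [this, mul_zero])]
  rw [Finset.sum_Ico_eq_sum_range]
  set ω := Complex.exp (2 * Real.pi * Complex.I / (r : ℂ)) with hω
  have hprim : IsPrimitiveRoot ω r := Complex.isPrimitiveRoot_exp r (by omega)
  have hconj : (starRingEnd ℂ) ω * ω = 1 := by
    rw [← Complex.normSq_eq_conj_mul_self, Complex.normSq_eq_norm_sq,
      hprim.norm'_eq_one (by omega)]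
    simp
  have hsum : ∀ j ∈ Finset.range (a + r - a),
      (starRingEnd ℂ) (fourier a (a + r - 1) n (a + j)) * fourier a (a + r - 1) n' (a + j) =
        ((starRingEnd ℂ) ω ^ n * ω ^ n') ^ j := by
    intro j hj
    have hj' : j < r := by simpa using hj
    rw [fourier_add a r n j hj', fourier_add a r n' j hj', ← hω, map_pow, map_pow, mul_pow]
  rw [Finset.sum_congr rfl hsum, Nat.add_sub_cancel_left]
  have hz1 : (starRingEnd ℂ) ω ^ n * ω ^ n' ≠ 1 := by
    intro h
    apply hne
    refine hprim.pow_inj hn hn' ?_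
    calc ω ^ n = ω ^ n * ((starRingEnd ℂ) ω ^ n * ω ^ n') := by rw [h, mul_one]
      _ = ((starRingEnd ℂ) ω * ω) ^ n * ω ^ n' := by ring
      _ = ω ^ n' := by rw [hconj]; simp
  have hzr : ((starRingEnd ℂ) ω ^ n * ω ^ n') ^ r = 1 := by
    rw [mul_pow, pow_right_comm, pow_right_comm ω, ← map_pow, hprim.pow_eq_one]
    simp
  rw [geom_sum_eq hz1, hzr, sub_self, zero_div]

theorem boxState_ne_zero_iff {N : ℕ} {d : Fin N → ℕ} {lo hi n : Fin N → ℕ}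
    {v : (i : Fin N) → Fin (d i)} :
    boxState lo hi n v ≠ 0 ↔ ∀ i, lo i ≤ v i ∧ (v i : ℕ) ≤ hi i := by
  rw [boxState, Finset.prod_ne_zero_iff]
  simp only [Finset.mem_univ, true_imp_iff, fourier_ne_zero_iff]

theorem boxState_orthogonal {N : ℕ} {d : Fin N → ℕ} {lo hi n n' : Fin N → ℕ}
    (hlh : ∀ i, lo i ≤ hi i) (hhd : ∀ i, hi i < d i)
    (hn : ∀ i, n i < hi i - lo i + 1) (hn' : ∀ i, n' i < hi i - lo i + 1) (hne : n ≠ n') :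
    ginner N d (boxState lo hi n) (boxState lo hi n') = 0 := by
  obtain ⟨i, hi'⟩ := Function.ne_iff.1 hne
  have : ginner N d (boxState lo hi n) (boxState lo hi n') =
      ∏ i, ∑ x : Fin (d i), (starRingEnd ℂ) (fourier (lo i) (hi i) (n i) x) *
        fourier (lo i) (hi i) (n' i) x := by
    rw [Finset.prod_univ_sum, Fintype.piFinset_univ]
    refine Finset.sum_congr rfl fun v _ => ?_
    simp only [boxState, map_prod, Finset.prod_mul_distrib]
  rw [this]
  exact Finset.prod_eq_zero (Finset.mem_univ i)
    (fourier_orthogonal (hlh i) (hhd i) (hn i) (hn' i) hi')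

theorem ginner_self_ne_zero {N : ℕ} {d : Fin N → ℕ} {ψ : ((i : Fin N) → Fin (d i)) → ℂ}
    (h : ψ ≠ 0) : ginner N d ψ ψ ≠ 0 := by
  have : ginner N d ψ ψ = star ψ ⬝ᵥ ψ := rfl
  rw [this]
  open scoped ComplexOrder in
  exact fun h0 => h (dotProduct_star_self_eq_zero.1 h0)

/-- If a set `Q` of boxes, given by their lower and upper corners, partitions `Z`, then the attached
product states form an orthogonal basis of `H_d`. -/
theorem basis_of_partition {N : ℕ} {d : Fin N → ℕ} (Q : Set ((Fin N → ℕ) × (Fin N → ℕ)))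
    (hlh : ∀ q ∈ Q, ∀ i, q.1 i ≤ q.2 i) (hhd : ∀ q ∈ Q, ∀ i, q.2 i < d i)
    (hex : ∀ v : (i : Fin N) → Fin (d i), ∃ q ∈ Q, ∀ i, q.1 i ≤ v i ∧ (v i : ℕ) ≤ q.2 i)
    (huniq : ∀ v : (i : Fin N) → Fin (d i), ∀ q ∈ Q, ∀ q' ∈ Q,
      (∀ i, q.1 i ≤ v i ∧ (v i : ℕ) ≤ q.2 i) →
      (∀ i, q'.1 i ≤ v i ∧ (v i : ℕ) ≤ q'.2 i) → q = q')
    (S : Set (((i : Fin N) → Fin (d i)) → ℂ))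
    (hS : S = {ψ | ∃ q ∈ Q, ∃ n : Fin N → ℕ, (∀ i, n i < q.2 i - q.1 i + 1) ∧
      ψ = boxState q.1 q.2 n}) :
    (S.ncard = ∏ i, d i) ∧ (∀ ψ ∈ S, ψ ≠ 0) ∧
    (∀ ψ ∈ S, ∀ φ ∈ S, ψ ≠ φ → ginner N d ψ φ = 0) ∧ (Submodule.span ℂ S = ⊤) := by
  choose q hqQ hq using hex
  -- The state labelled by `v`: the box of `v`, with Fourier indices the position of `v` in it.
  set Φ : ((i : Fin N) → Fin (d i)) → (((i : Fin N) → Fin (d i)) → ℂ) :=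
    fun v => boxState (q v).1 (q v).2 (fun i => v i - (q v).1 i) with hΦ
  have hlt : ∀ v i, (v i : ℕ) - (q v).1 i < (q v).2 i - (q v).1 i + 1 := by
    intro v i
    have := hq v i
    omega
  have hrange : S = Set.range Φ := by
    rw [hS]
    ext ψ
    constructor
    · rintro ⟨p, hp, n, hn, rfl⟩
      have hw : ∀ i, p.1 i + n i < d i := by
        intro i
        have := hlh p hp i
        have := hhd p hp i
        have := hn i
        omega
      refine ⟨fun i => ⟨p.1 i + n i, hw i⟩, ?_⟩
      have hqp : q (fun i => ⟨p.1 i + n i, hw i⟩) = p := by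
        refine huniq _ _ (hqQ _) p hp (hq _) fun i => ?_
        have := hlh p hp i
        have := hn i
        dsimp only
        omega
      simp only [hΦ, hqp]
      congr 1
      funext i
      omega
    · rintro ⟨v, rfl⟩
      exact ⟨q v, hqQ v, _, hlt v, rfl⟩
  have hne : ∀ v, Φ v ≠ 0 := fun v h =>
    boxState_ne_zero_iff.2 (hq v) (congrFun h v)
  have horth : ∀ v w, v ≠ w → ginner N d (Φ v) (Φ w) = 0 := by
    intro v w hvw
    by_cases hqq : q v = q w
    · have e : Φ v = boxState (q w).1 (q w).2 (fun i => v i - (q w).1 i) := by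
        simp only [hΦ, hqq]
      have hv := hq v
      have hlv := hlt v
      rw [hqq] at hv hlv
      rw [e]
      refine boxState_orthogonal (hlh _ (hqQ w)) (hhd _ (hqQ w)) hlv (hlt w) fun h => hvw ?_
      funext i
      have h1 := congrFun h i
      have h2 := hv i
      have h3 := hq w i
      exact Fin.ext (by omega)
    · refine Finset.sum_eq_zero fun x _ => ?_
      by_contra h
      obtain ⟨h1, h2⟩ := mul_ne_zero_iff.1 h
      exact hqq (huniq x _ (hqQ v) _ (hqQ w)
        (boxState_ne_zero_iff.1 ((map_ne_zero _).1 h1)) (boxState_ne_zero_iff.1 h2))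
  have hli : LinearIndependent ℂ Φ := by
    rw [Fintype.linearIndependent_iff]
    intro c hc v
    have h0 : ginner N d (Φ v) (∑ w, c w • Φ w) = 0 := by
      rw [hc]; simp [ginner]
    have h1 : ginner N d (Φ v) (∑ w, c w • Φ w) = ∑ w, c w * ginner N d (Φ v) (Φ w) := by
      simp only [ginner, Finset.sum_apply, Pi.smul_apply, smul_eq_mul, Finset.mul_sum]
      rw [Finset.sum_comm]
      exact Finset.sum_congr rfl fun w _ => Finset.sum_congr rfl fun x _ => by ring
    rw [h1, Finset.sum_eq_single v (fun w _ hw => by rw [horth v w hw.symm, mul_zero])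
      (fun h => absurd (Finset.mem_univ v) h)] at h0
    exact (mul_eq_zero.1 h0).resolve_right (ginner_self_ne_zero (hne v))
  rw [hrange]
  refine ⟨?_, ?_, ?_, ?_⟩
  · rw [← Set.image_univ, Set.ncard_image_of_injective _ hli.injective, Set.ncard_univ,
      Nat.card_eq_fintype_card, Fintype.card_pi]
    simp
  · rintro _ ⟨v, rfl⟩
    exact hne v
  · rintro _ ⟨v, rfl⟩ _ ⟨w, rfl⟩ h
    exact horth v w fun e => h (e ▸ rfl)
  · by_cases hz : Nonempty ((i : Fin N) → Fin (d i))
    · exact hli.span_eq_top_of_card_eq_finrank (by simp)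
    · have := not_nonempty_iff.1 hz
      exact Subsingleton.elim _ _

/-! ### The sequence of sides -/

theorem side_eq (N : ℕ) (K : Finset (Fin N)) (b : Bool) (m : ℕ) :
    side N K b m = Bool.xor b
      (decide (Odd (∑ j ∈ Finset.range m, if j + 1 ∈ K.image Fin.val then 1 else 0))) := by
  induction m with
  | zero => simp [side]
  | succ m ih =>
    rw [side, ih, Finset.sum_range_succ]
    by_cases h : m + 1 ∈ K.image Fin.val
    · simp only [h, if_true, Nat.odd_add_one]
      rw [decide_not, decide_true, Bool.xor_true, Bool.xor_not]
    · simp only [h, if_false, decide_false, Bool.xor_false, add_zero]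

/-- Evenness of `K` is the closing condition of the recursion: the sides change at `0 ∈ K`, read
cyclically from coordinate `N - 1` to coordinate `0`, just as at the other elements of `K`. -/
theorem even_card_iff (M : ℕ) (K : Finset (Fin (M + 1))) (b : Bool) :
    Even K.card ↔ (0 ∈ K ↔ side (M + 1) K b 0 ≠ side (M + 1) K b M) := by
  have hc : K.card = (∑ j ∈ Finset.range M, if j + 1 ∈ K.image Fin.val then 1 else 0) +
      if (0 : Fin (M + 1)) ∈ K then 1 else 0 := by
    have h0 : ((0 : Fin (M + 1)) ∈ K) ↔ 0 ∈ K.image Fin.val := by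
      simp only [Finset.mem_image]
      exact ⟨fun h => ⟨0, h, rfl⟩, fun ⟨x, hx, hx0⟩ => (Fin.ext hx0 : x = 0) ▸ hx⟩
    simp only [h0]
    rw [← Finset.sum_range_succ' (fun j => if j ∈ K.image Fin.val then 1 else 0) M,
      ← Finset.card_image_of_injective K Fin.val_injective, Finset.sum_ite_mem,
      Finset.inter_eq_right.2, Finset.card_eq_sum_ones]
    intro x hx
    obtain ⟨y, _, rfl⟩ := Finset.mem_image.1 hx
    exact Finset.mem_range.2 y.2
  rw [side_eq _ _ _ M, side, hc]
  generalize (∑ j ∈ Finset.range M, if j + 1 ∈ K.image Fin.val then 1 else 0) = c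
  by_cases h : (0 : Fin (M + 1)) ∈ K <;> by_cases h' : Odd c <;> cases b <;>
    simp_all [Nat.even_add_one]

theorem mem_iff_side {N : ℕ} (K : Finset (Fin N)) (b : Bool) (m : ℕ) (hm : m + 1 < N) :
    (⟨m + 1, hm⟩ : Fin N) ∈ K ↔ side N K b (m + 1) ≠ side N K b m := by
  have h : (⟨m + 1, hm⟩ : Fin N) ∈ K ↔ m + 1 ∈ K.image Fin.val := by
    simp only [Finset.mem_image]
    exact ⟨fun h => ⟨_, h, rfl⟩, fun ⟨x, hx, hx0⟩ => (Fin.ext hx0 : x = ⟨m + 1, hm⟩) ▸ hx⟩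
  rw [h, side]
  by_cases hmem : m + 1 ∈ K.image Fin.val <;> cases side N K b m <;> simp [hmem]

/-! ### The boxes partition `Z` -/

/-- Membership of a coordinate in a component of `P_{k,K}`. The four clauses read off the replacement
rule in terms of whether the coordinate is extreme in its layer. -/
theorem comp_iff {N : ℕ} {d : Fin N → ℕ} {k : ℕ} {K : Finset (Fin N)} {b : Bool} {i : Fin N}
    (hk : 1 ≤ k) (hkd : 2 * k + 1 ≤ d i) (x : ℕ) :
    (glo N d k K b i ≤ x ∧ x ≤ ghi N d k K b i) ↔
      (k - 1 ≤ x ∧ x ≤ d i - k) ∧ (x = k - 1 → side N K b i = false) ∧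
      (x = d i - k → side N K b i = true) ∧ (x ≠ k - 1 → x ≠ d i - k → i ∈ K) := by
  unfold glo ghi
  by_cases h : i ∈ K <;> cases hs : side N K b i.val <;> simp [h] <;> omega

/-- A point of `P_{k,K}` has an extreme coordinate, since otherwise `K` would be everything, of odd
cardinality `N`. -/
theorem exists_extreme {N : ℕ} (hodd : Odd N) {d : Fin N → ℕ} {k : ℕ} {K : Finset (Fin N)}
    {b : Bool} (hk : 1 ≤ k) (hkd : ∀ i, 2 * k + 1 ≤ d i) (hK : Even K.card)
    {v : Fin N → ℕ} (hv : ∀ i, glo N d k K b i ≤ v i ∧ v i ≤ ghi N d k K b i) :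
    ∃ i, v i = k - 1 ∨ v i = d i - k := by
  by_contra! h
  have : K = Finset.univ := by
    ext i
    simp only [Finset.mem_univ, iff_true]
    exact ((comp_iff hk (hkd i) _).1 (hv i)).2.2.2 (h i).1 (h i).2
  rw [this, Finset.card_univ, Fintype.card_fin] at hK
  exact (Nat.not_even_iff_odd.2 hodd) hK

theorem layer_le {N : ℕ} (hodd : Odd N) {d : Fin N → ℕ} {k k' : ℕ} {K : Finset (Fin N)}
    {b : Bool} (hk : 1 ≤ k) (hkd : ∀ i, 2 * k + 1 ≤ d i) (hK : Even K.card)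
    {v : Fin N → ℕ} (hv : ∀ i, glo N d k K b i ≤ v i ∧ v i ≤ ghi N d k K b i)
    (h : ∀ i, k' - 1 ≤ v i ∧ v i + k' ≤ d i) : k' ≤ k := by
  obtain ⟨i, hi⟩ := exists_extreme hodd hk hkd hK hv
  have := h i
  have := hkd i
  omega

/-- Inside a layer, a point lies in at most one box: at an extreme coordinate the side is prescribed,
and elsewhere it is the opposite of the preceding one, so that two side sequences agreeing somewhere
agree all around the cycle. -/
theorem cube_unique {N : ℕ} (hodd : Odd N) {d : Fin N → ℕ} {k : ℕ} {K K' : Finset (Fin N)}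
    {b b' : Bool} (hk : 1 ≤ k) (hkd : ∀ i, 2 * k + 1 ≤ d i) (hK : Even K.card)
    (hK' : Even K'.card) {v : Fin N → ℕ}
    (hv : ∀ i, glo N d k K b i ≤ v i ∧ v i ≤ ghi N d k K b i)
    (hv' : ∀ i, glo N d k K' b' i ≤ v i ∧ v i ≤ ghi N d k K' b' i) : K = K' ∧ b = b' := by
  obtain ⟨i₀, hi₀⟩ := exists_extreme hodd hk hkd hK hv
  obtain ⟨M, rfl⟩ : ∃ M, N = M + 1 := ⟨N - 1, by have := hodd.pos; omega⟩
  have c := fun i => (comp_iff hk (hkd i) _).1 (hv i)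
  have c' := fun i => (comp_iff hk (hkd i) _).1 (hv' i)
  have z' := (even_card_iff M K' b').1 hK'
  have z := (even_card_iff M K b).1 hK
  -- One step of the cyclic propagation, from the side `t` preceding coordinate `i`.
  have step : ∀ (i : Fin (M + 1)) (t : Bool),
      (i ∈ K ↔ side (M + 1) K b i ≠ t) → (i ∈ K' ↔ side (M + 1) K' b' i ≠ t) →
      side (M + 1) K b i = side (M + 1) K' b' i := by
    intro i t h h'
    by_cases h1 : v i = k - 1
    · rw [(c i).2.1 h1, (c' i).2.1 h1]
    by_cases h2 : v i = d i - k
    · rw [(c i).2.2.1 h2, (c' i).2.2.1 h2]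
    have := h.1 ((c i).2.2.2 h1 h2)
    have := h'.1 ((c' i).2.2.2 h1 h2)
    revert this
    revert this
    cases side (M + 1) K b i <;> cases side (M + 1) K' b' i <;> cases t <;> simp
  have up : ∀ m, m + 1 < M + 1 → side (M + 1) K b m = side (M + 1) K' b' m →
      side (M + 1) K b (m + 1) = side (M + 1) K' b' (m + 1) := by
    intro m hm h
    exact step ⟨m + 1, hm⟩ (side (M + 1) K b m) (mem_iff_side K b m hm)
      (h ▸ mem_iff_side K' b' m hm)
  have upto : ∀ m, side (M + 1) K b m = side (M + 1) K' b' m → ∀ n, m ≤ n → n ≤ M →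
      side (M + 1) K b n = side (M + 1) K' b' n := by
    intro m h n hmn
    induction n, hmn using Nat.le_induction with
    | base => exact fun _ => h
    | succ n _ ih => exact fun hn => up n (by omega) (ih (by omega))
  have hM : side (M + 1) K b M = side (M + 1) K' b' M := by
    refine upto i₀ ?_ M (by omega) le_rfl
    rcases hi₀ with h | h
    · rw [(c i₀).2.1 h, (c' i₀).2.1 h]
    · rw [(c i₀).2.2.1 h, (c' i₀).2.2.1 h]
  have h0 : side (M + 1) K b 0 = side (M + 1) K' b' 0 :=
    step 0 (side (M + 1) K b M) z (hM ▸ z')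
  have all : ∀ n, n ≤ M → side (M + 1) K b n = side (M + 1) K' b' n :=
    fun n hn => upto 0 h0 n (Nat.zero_le _) hn
  refine ⟨?_, h0⟩
  ext ⟨i, hi⟩
  cases i with
  | zero => exact z.trans (by rw [h0, hM]; exact z'.symm)
  | succ m =>
    rw [mem_iff_side K b m hi, mem_iff_side K' b' m hi, all m (by omega), all (m + 1) (by omega)]

/-- The side forced at a coordinate with value `x`, given the preceding side `t`. -/
def nextSide (k e x : ℕ) (t : Bool) : Bool :=
  if x = k - 1 then false else if x = e - k then true else !t

/-- The sides read off from `v` by running around the cycle `ℤ/N` repeatedly, starting from an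
arbitrary side before coordinate `0`. From the first extreme coordinate on, the arbitrary choice is
forgotten. -/
def runSide (M k : ℕ) (d v : Fin (M + 1) → ℕ) : ℕ → Bool
  | 0 => nextSide k (d 0) (v 0) false
  | j + 1 => nextSide k (d (Fin.ofNat (M + 1) (j + 1))) (v (Fin.ofNat (M + 1) (j + 1)))
      (runSide M k d v j)

/-- The second lap of `runSide` is a consistent cyclic sequence of sides. -/
theorem exists_cyclic (M k : ℕ) (d v : Fin (M + 1) → ℕ)
    (hex : ∃ i, v i = k - 1 ∨ v i = d i - k) :
    ∃ s : ℕ → Bool, s 0 = nextSide k (d 0) (v 0) (s M) ∧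
      ∀ m (hm : m + 1 < M + 1),
        s (m + 1) = nextSide k (d ⟨m + 1, hm⟩) (v ⟨m + 1, hm⟩) (s m) := by
  obtain ⟨i₀, hi₀⟩ := hex
  have ofNat_add : ∀ (j : ℕ) (hj : j < M + 1), Fin.ofNat (M + 1) (j + (M + 1)) = ⟨j, hj⟩ := by
    intro j hj
    ext
    simp [Nat.mod_eq_of_lt hj]
  have ofNat_lt : ∀ (j : ℕ) (hj : j < M + 1), Fin.ofNat (M + 1) j = ⟨j, hj⟩ := by
    intro j hj
    ext
    simp [Nat.mod_eq_of_lt hj]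
  have second : ∀ m (hm : m < M + 1), runSide M k d v (m + (M + 1)) =
      nextSide k (d ⟨m, hm⟩) (v ⟨m, hm⟩) (runSide M k d v (m + M)) := by
    intro m hm
    rw [← add_assoc, runSide]
    have := ofNat_add m hm
    rw [← add_assoc] at this
    rw [this]
  have first : ∀ m (hm : m < M + 1), ∃ t, runSide M k d v m =
      nextSide k (d ⟨m, hm⟩) (v ⟨m, hm⟩) t := by
    intro m hm
    cases m with
    | zero => exact ⟨false, rfl⟩
    | succ m => exact ⟨_, by rw [runSide, ofNat_lt (m + 1) hm]⟩
  have agree : ∀ m, (i₀ : ℕ) ≤ m → m ≤ M →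
      runSide M k d v m = runSide M k d v (m + (M + 1)) := by
    intro m hm
    induction m, hm using Nat.le_induction with
    | base =>
      intro _
      obtain ⟨t, ht⟩ := first i₀ i₀.2
      rw [ht, second i₀ i₀.2]
      unfold nextSide
      rcases hi₀ with h | h
      · simp [h]
      · simp [h]
    | succ m _ ih =>
      intro hm
      rw [second (m + 1) (by omega), runSide, ofNat_lt (m + 1) (by omega), ih (by omega)]
      congr 2
      omega
  refine ⟨fun m => runSide M k d v (m + (M + 1)), ?_, fun m hm => ?_⟩
  · dsimp only
    rw [← agree M (by omega) le_rfl, second 0 (by omega), Nat.zero_add]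
    rfl
  · dsimp only
    rw [second (m + 1) hm]
    congr 2
    omega

/-- Every point of the `k`-th layer lies in some box `P_{k,K}`. -/
theorem cube_exists {N : ℕ} (hN : 0 < N) {d : Fin N → ℕ} {k : ℕ} (hk : 1 ≤ k)
    (hkd : ∀ i, 2 * k + 1 ≤ d i) {v : Fin N → ℕ} (hv : ∀ i, k - 1 ≤ v i ∧ v i ≤ d i - k)
    (hex : ∃ i, v i = k - 1 ∨ v i = d i - k) :
    ∃ (K : Finset (Fin N)) (b : Bool), Even K.card ∧
      ∀ i, glo N d k K b i ≤ v i ∧ v i ≤ ghi N d k K b i := by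
  obtain ⟨M, rfl⟩ : ∃ M, N = M + 1 := ⟨N - 1, by omega⟩
  obtain ⟨s, hs0, hs⟩ := exists_cyclic M k d v hex
  -- The side before coordinate `i`, cyclically.
  let p : ℕ → Bool := fun i => if i = 0 then s M else s (i - 1)
  have hsp : ∀ i : Fin (M + 1), s i = nextSide k (d i) (v i) (p i) := by
    rintro ⟨i, hi⟩
    cases i with
    | zero => exact hs0
    | succ m => exact hs m hi
  let K : Finset (Fin (M + 1)) := Finset.univ.filter fun i => s i ≠ p i
  have hK : ∀ i, i ∈ K ↔ s i ≠ p i := fun i => by simp [K]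
  have hside : ∀ m, m ≤ M → side (M + 1) K (s 0) m = s m := by
    intro m
    induction m with
    | zero => exact fun _ => rfl
    | succ m ih =>
      intro hm
      have h1 := mem_iff_side K (s 0) m (by omega)
      rw [ih (by omega), hK] at h1
      have h2 : p (m + 1) = s m := rfl
      dsimp only at h1
      rw [h2] at h1
      revert h1
      cases s (m + 1) <;> cases s m <;> cases side (M + 1) K (s 0) (m + 1) <;> simp
  refine ⟨K, s 0, (even_card_iff M K (s 0)).2 ?_, fun i => ?_⟩
  · rw [hside 0 (by omega), hside M le_rfl, hK]
    exact Iff.rfl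
  · rw [comp_iff hk (hkd i), hside i (by omega), hK, hsp i]
    have := hkd i
    refine ⟨hv i, fun h => ?_, fun h => ?_, fun h1 h2 => ?_⟩
    · simp [nextSide, h]
    · have : v i ≠ k - 1 := by omega
      rw [nextSide, if_neg this, if_pos h]
    · rw [nextSide, if_neg h1, if_neg h2]
      cases p i <;> simp

/-- The corners of all boxes: the central box `B₀`, and the `P_{k,K}` with `1 ≤ k ≤ L` and `K`
even. -/
def boxes (N : ℕ) (d : Fin N → ℕ) (L : ℕ) : Set ((Fin N → ℕ) × (Fin N → ℕ)) :=
  {q | q = (fun _ => L, fun i => d i - L - 1)} ∪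
    {q | ∃ k K b, 1 ≤ k ∧ k ≤ L ∧ Even (Finset.card K) ∧ q = (glo N d k K b, ghi N d k K b)}

theorem boxes_bounds {N : ℕ} {d : Fin N → ℕ} {L : ℕ} (hLd : ∀ i, 2 * L + 1 ≤ d i) :
    ∀ q ∈ boxes N d L, ∀ i, q.1 i ≤ q.2 i ∧ q.2 i < d i := by
  rintro q (rfl | ⟨k, K, b, hk, hkL, -, rfl⟩) i
  · have := hLd i
    dsimp only
    omega
  · have := hLd i
    dsimp only [glo, ghi]
    split_ifs <;> omega

theorem boxes_exists {N : ℕ} (hN : 0 < N) {d : Fin N → ℕ} {L : ℕ} (hLd : ∀ i, 2 * L + 1 ≤ d i)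
    (v : (i : Fin N) → Fin (d i)) :
    ∃ q ∈ boxes N d L, ∀ i, q.1 i ≤ v i ∧ (v i : ℕ) ≤ q.2 i := by
  classical
  by_cases h : ∃ j, ∃ i, (v i : ℕ) < j ∨ d i ≤ v i + j
  swap
  · push Not at h
    refine ⟨_, Or.inl rfl, fun i => ?_⟩
    have := h L i
    dsimp only
    omega
  -- The layer of `v` is the least `j` such that `v` is within `j` of the boundary.
  set k := Nat.find h with hkdef
  have hspec : ∃ i, (v i : ℕ) < k ∨ d i ≤ v i + k := Nat.find_spec h
  have hmin : ∀ j, j < k → ∀ i, j ≤ (v i : ℕ) ∧ (v i : ℕ) + j < d i := by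
    intro j hj i
    have := Nat.find_min h hj
    push Not at this
    exact this i
  by_cases hkL : k ≤ L
  · have hk : 1 ≤ k := by
      obtain ⟨i, hi⟩ := hspec
      have := (v i).2
      omega
    have hv := hmin (k - 1) (by omega)
    obtain ⟨K, b, hK, hKv⟩ := cube_exists (d := d) (v := fun i => (v i : ℕ)) hN hk
      (fun i => by have := hLd i; omega)
      (fun i => by have := hv i; have := hLd i; omega)
      (by
        obtain ⟨i, hi⟩ := hspec
        have := hv i
        have := hLd i
        exact ⟨i, by omega⟩)
    exact ⟨_, Or.inr ⟨k, K, b, hk, hkL, hK, rfl⟩, hKv⟩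
  · refine ⟨_, Or.inl rfl, fun i => ?_⟩
    have := hmin L (by omega) i
    dsimp only
    omega

theorem boxes_unique {N : ℕ} (hodd : Odd N) {d : Fin N → ℕ} {L : ℕ}
    (hLd : ∀ i, 2 * L + 1 ≤ d i) (v : (i : Fin N) → Fin (d i)) :
    ∀ q ∈ boxes N d L, ∀ q' ∈ boxes N d L,
      (∀ i, q.1 i ≤ v i ∧ (v i : ℕ) ≤ q.2 i) →
      (∀ i, q'.1 i ≤ v i ∧ (v i : ℕ) ≤ q'.2 i) → q = q' := by
  have hd : ∀ {k}, k ≤ L → ∀ i, 2 * k + 1 ≤ d i := fun hk i => by have := hLd i; omega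
  -- The central box is contained in the outer box of the would-be layer `L + 1`.
  have central : ∀ k K b, 1 ≤ k → k ≤ L → Even (Finset.card K) →
      (∀ i, glo N d k K b i ≤ v i ∧ (v i : ℕ) ≤ ghi N d k K b i) →
      (∀ i, L ≤ v i ∧ (v i : ℕ) ≤ d i - L - 1) → False := by
    intro k K b hk hkL hK h h0
    have := layer_le (v := fun i => (v i : ℕ)) (k' := L + 1) hodd hk (hd hkL) hK h
      (fun i => by have := h0 i; have := hLd i; omega)
    omega
  rintro q (rfl | ⟨k, K, b, hk, hkL, hK, rfl⟩) q' (rfl | ⟨k', K', b', hk', hkL', hK', rfl⟩) h h'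
  · rfl
  · exact (central _ _ _ hk' hkL' hK' h' h).elim
  · exact (central _ _ _ hk hkL hK h h').elim
  · have r : ∀ i, k - 1 ≤ (v i : ℕ) ∧ (v i : ℕ) + k ≤ d i := fun i => by
      have := ((comp_iff hk (hd hkL i) _).1 (h i)).1
      have := hd hkL i
      omega
    have r' : ∀ i, k' - 1 ≤ (v i : ℕ) ∧ (v i : ℕ) + k' ≤ d i := fun i => by
      have := ((comp_iff hk' (hd hkL' i) _).1 (h' i)).1
      have := hd hkL' i
      omega
    obtain rfl : k = k' := le_antisymm
      (layer_le (v := fun i => (v i : ℕ)) hodd hk' (hd hkL') hK' h' r)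
      (layer_le (v := fun i => (v i : ℕ)) hodd hk (hd hkL) hK h r')
    obtain ⟨rfl, rfl⟩ :=
      cube_unique (v := fun i => (v i : ℕ)) hodd hk (hd hkL) hK hK' h h'
    rfl

theorem gBasisSet_eq {N : ℕ} {d : Fin N → ℕ} {L : ℕ} (hLd : ∀ i, 2 * L + 1 ≤ d i) :
    gBasisSet N d L = {ψ | ∃ q ∈ boxes N d L, ∃ n : Fin N → ℕ,
      (∀ i, n i < q.2 i - q.1 i + 1) ∧ ψ = boxState q.1 q.2 n} := by
  have e : ∀ i, d i - L - 1 - L + 1 = d i - 2 * L := fun i => by have := hLd i; omega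
  ext ψ
  constructor
  · rintro (⟨n, hn, rfl⟩ | ⟨k, K, b, n, hk, hkL, hK, hn, rfl⟩)
    · exact ⟨_, Or.inl rfl, n, fun i => (e i).symm ▸ hn i, rfl⟩
    · exact ⟨_, Or.inr ⟨k, K, b, hk, hkL, hK, rfl⟩, n, hn, rfl⟩
  · rintro ⟨q, rfl | ⟨k, K, b, hk, hkL, hK, rfl⟩, n, hn, rfl⟩
    · exact Or.inl ⟨n, fun i => e i ▸ hn i, rfl⟩
    · exact Or.inr ⟨k, K, b, n, hk, hkL, hK, hn, rfl⟩

/-- The `d₁·d₂⋯d_N` product states attached to the subcubes in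
`{B₀} ∪ {P_{k,K} : 1 ≤ k ≤ L, K even, P ∈ {C,D}}` are pairwise orthogonal and
nonzero; consequently they form an orthogonal basis of `H_d`. -/
theorem general_orthogonal_basis (N : ℕ) (hodd : Odd N) (hN : 3 ≤ N)
    (d : Fin N → ℕ) (hd : ∀ i, 3 ≤ d i) (hmono : Monotone d)
    (L : ℕ) (hL : L = (d ⟨0, by omega⟩ - 1) / 2) :
    ((gBasisSet N d L).ncard = ∏ i, d i) ∧
    (∀ ψ ∈ gBasisSet N d L, ψ ≠ 0) ∧
    (∀ ψ ∈ gBasisSet N d L, ∀ φ ∈ gBasisSet N d L, ψ ≠ φ →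
        ginner N d ψ φ = 0) ∧
    (Submodule.span ℂ (gBasisSet N d L) = ⊤) := by
  have hLd : ∀ i, 2 * L + 1 ≤ d i := by
    intro i
    have h1 : d ⟨0, by omega⟩ ≤ d i := hmono (Fin.mk_le_of_le_val (Nat.zero_le _))
    have h2 := hd ⟨0, by omega⟩
    omega
  exact basis_of_partition (boxes N d L) (fun q hq i => (boxes_bounds hLd q hq i).1)
    (fun q hq i => (boxes_bounds hLd q hq i).2) (boxes_exists (by omega) hLd)
    (boxes_unique hodd hLd) _ (gBasisSet_eq hLd)

end SNL
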